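/- Let (X,F,μ) be a probability space, T: X → X an ergodic measure-preserving transformation, and {f_n} a sequence of non-negative measurable functions with sup_x f_1(x) < ∞ and f_{n+m}(x) ≤ f_m(x) f_n(T^m x) for all n, m, x. Set α = lim_n (1/n)∫ log f_n dμ. If α ≠ −∞, then for every ε > 0 and μ-a.e. x there exists n_0(x) such that |log f_n(T^m x) − nα| ≤ (n+m)ε for all n ≥ n_0(x) and all m ∈ ℕ. -/

import Mathlib

open MeasureTheory Filter
open scoped ENNReal

/-- `log` with the convention `log x = -∞` for `x ≤ 0`. -/
noncomputable def elog (x : ℝ) : EReal := ENNReal.log (ENNReal.ofReal x)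

/-- The positive part of an extended real, as an extended nonnegative real. -/
noncomputable def epos (e : EReal) : ℝ≥0∞ := if e = ⊤ then ⊤ else ENNReal.ofReal e.toReal

/-- Integral of an `EReal`-valued function (difference of the integrals of the positive
and negative parts), allowing the value `-∞`. -/
noncomputable def eintegral {X : Type*} [MeasurableSpace X] (μ : Measure X)
    (g : X → EReal) : EReal :=
  ((∫⁻ x, epos (g x) ∂μ : ℝ≥0∞) : EReal) - ((∫⁻ x, epos (-(g x)) ∂μ : ℝ≥0∞) : EReal)

/-!
Subtracting the Birkhoff sums of `log f₁` from `g_n = log f_n` reduces everything to a nonpositive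
subadditive process, together with Birkhoff's theorem. Let `a = lim (1/n) ∫ g_n` and `s < a`. By a
0-1 law, either `g_n(x) ≥ n s - O(1)` for a.e. `x`, or a.e. `x` sees a time `k ≥ 1` with
`g_k(x) ≤ k s`; in the second case orbits are covered by blocks of slope at most `s` up to a set of
times of small density, and integrating gives `a ≤ s`, a contradiction. Birkhoff's theorem is the
additive case of this lower bound, after truncation.

Averaging the decompositions of `[m, m + n)` into blocks of length `N` over their `N` offsets bounds
`g_n(T^m x)` by `1/N` times a Birkhoff sum of `g_N`, which gives the upper bound uniformly in `m`.
The uniform lower bound follows from `g_n(T^m x) ≥ g_{m+n}(x) - g_m(x)`: the errors at the times `m`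
and `m + n` account for the `m ε` term.
-/

open scoped Topology

section Invariance

variable {X E : Type*} [MeasurableSpace X] [NormedAddCommGroup E] {μ : Measure X} {T : X → X}

lemma ae_forall_iterate (hT : Measure.QuasiMeasurePreserving T μ μ) {p : X → Prop}
    (hp : ∀ᵐ x ∂μ, p x) : ∀ᵐ x ∂μ, ∀ i : ℕ, p (T^[i] x) :=
  ae_all_iff.2 fun i => (hT.iterate i).ae hp

lemma integral_comp_of_measurePreserving [NormedSpace ℝ E] {Y : Type*} [MeasurableSpace Y]
    {ν : Measure Y} {S : X → Y} (hS : MeasurePreserving S μ ν) {φ : Y → E}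
    (hφ : AEStronglyMeasurable φ ν) : ∫ x, φ (S x) ∂μ = ∫ y, φ y ∂ν := by
  rw [← hS.map_eq] at hφ ⊢
  exact (integral_map hS.aemeasurable hφ).symm

lemma integrable_birkhoffSum (hT : MeasurePreserving T μ μ) {φ : X → E} (hφ : Integrable φ μ)
    (n : ℕ) : Integrable (birkhoffSum T φ n) μ :=
  integrable_finsetSum _ fun i _ => (hT.iterate i).integrable_comp_of_integrable hφ

lemma integral_birkhoffSum [NormedSpace ℝ E] (hT : MeasurePreserving T μ μ) {φ : X → E}
    (hφ : Integrable φ μ) (n : ℕ) : ∫ x, birkhoffSum T φ n x ∂μ = n • ∫ x, φ x ∂μ := by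
  simp only [birkhoffSum]
  rw [integral_finsetSum (f := fun i x => φ (T^[i] x)) _ fun i _ =>
    (hT.iterate i).integrable_comp_of_integrable hφ]
  simp [integral_comp_of_measurePreserving (hT.iterate _) hφ.aestronglyMeasurable]

end Invariance

lemma sum_range_sum_range_add_mul {M : Type*} [AddCommMonoid M] (F : ℕ → M) (N q : ℕ) :
    ∑ r ∈ Finset.range N, ∑ j ∈ Finset.range q, F (r + j * N) =
      ∑ k ∈ Finset.range (q * N), F k := by
  induction q with
  | zero => simp
  | succ q ih =>
    rw [Nat.succ_mul, Finset.sum_range_add, ← ih]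
    simp only [Finset.sum_range_succ, Finset.sum_add_distrib, add_comm]

/-- Kingman's subadditivity condition for a two-parameter family: `H i n` is the value attached to
the time interval `[i, i + n)`. Along an orbit, a subadditive process `g` gives
`H i n = g n (T^[i] x)`. -/
def IsSubadditiveArray (H : ℕ → ℕ → ℝ) : Prop :=
  ∀ i m n, H i (m + n) ≤ H i m + H (i + m) n

namespace IsSubadditiveArray

variable {H : ℕ → ℕ → ℝ}

lemma le_sum_blocks (hH : IsSubadditiveArray H) (h0 : ∀ i, H i 0 ≤ 0) (N q i : ℕ) :
    H i (q * N) ≤ ∑ j ∈ Finset.range q, H (i + j * N) N := by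
  induction q with
  | zero => simpa using h0 i
  | succ q ih =>
    rw [Finset.sum_range_succ, Nat.succ_mul]
    linarith [hH i (q * N) N]

lemma le_sum_range (hH : IsSubadditiveArray H) (h0 : ∀ i, H i 0 ≤ 0) (i n : ℕ) :
    H i n ≤ ∑ j ∈ Finset.range n, H (i + j) 1 := by
  simpa using hH.le_sum_blocks h0 1 n i

lemma le_of_nonpos_of_add_le (hH : IsSubadditiveArray H) (hneg : ∀ i n, H i n ≤ 0)
    {r m n : ℕ} (hn : r + m ≤ n) (i : ℕ) : H i n ≤ H (i + r) m := by
  obtain ⟨k, rfl⟩ := Nat.exists_eq_add_of_le hn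
  linarith [hH i (r + m) k, hH i r m, hneg i r, hneg (i + (r + m)) k]

lemma mul_le_sum_range_of_nonpos (hH : IsSubadditiveArray H) (hneg : ∀ i n, H i n ≤ 0)
    {N q n : ℕ} (hq : q * N ≤ n - N) (i : ℕ) :
    N * H i n ≤ ∑ k ∈ Finset.range (q * N), H (i + k) N := by
  -- For each offset `r < N`, drop the ends of `[i, i + n)` and cut the rest into `q` blocks.
  have hoffset : ∀ r ∈ Finset.range N, H i n ≤ ∑ j ∈ Finset.range q, H (i + (r + j * N)) N := by
    intro r hr
    rw [Finset.mem_range] at hr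
    rcases q.eq_zero_or_pos with rfl | hq0
    · simpa using hneg i n
    · have hqN : 0 < q * N := Nat.mul_pos hq0 (by omega)
      simpa only [add_assoc] using
        (hH.le_of_nonpos_of_add_le hneg (show r + q * N ≤ n by omega) i).trans
          (hH.le_sum_blocks (fun k => hneg k 0) N q (i + r))
  calc (N : ℝ) * H i n = ∑ _r ∈ Finset.range N, H i n := by simp
    _ ≤ ∑ r ∈ Finset.range N, ∑ j ∈ Finset.range q, H (i + (r + j * N)) N :=
      Finset.sum_le_sum hoffset
    _ = ∑ k ∈ Finset.range (q * N), H (i + k) N :=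
      sum_range_sum_range_add_mul (fun k => H (i + k) N) N q

lemma le_mul_sub_sum_indicator (hH : IsSubadditiveArray H) (hneg : ∀ i n, H i n ≤ 0) {s : ℝ}
    (hs : s ≤ 0) {N : ℕ} {B : Set ℕ} (hB : ∀ i ∉ B, ∃ k, 1 ≤ k ∧ k ≤ N ∧ H i k ≤ k * s)
    (i n : ℕ) : H i n ≤ s * (n - N - ∑ j ∈ Finset.range n, B.indicator 1 (i + j)) := by
  have hind : ∀ i n, (0 : ℝ) ≤ ∑ j ∈ Finset.range n, B.indicator 1 (i + j) := fun i n =>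
    Finset.sum_nonneg fun j _ => Set.indicator_nonneg (fun _ _ => zero_le_one) _
  induction n using Nat.strong_induction_on generalizing i with
  | _ n ih =>
    rcases le_or_gt n N with hnN | hNn
    · have hnN' : (n : ℝ) ≤ N := by exact_mod_cast hnN
      exact (hneg i n).trans (mul_nonneg_of_nonpos_of_nonpos hs (by linarith [hind i n]))
    -- Greedy cover: a single time step inside `B`, a block of slope at most `s` elsewhere.
    obtain ⟨k, hk1, hkn, hk⟩ : ∃ k, 1 ≤ k ∧ k ≤ n ∧
        H i k ≤ s * (k - ∑ j ∈ Finset.range k, B.indicator 1 (i + j)) := by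
      by_cases hi : i ∈ B
      · exact ⟨1, le_rfl, by omega, by simpa [hi] using hneg i 1⟩
      · obtain ⟨k, hk1, hkN, hk⟩ := hB i hi
        exact ⟨k, hk1, by omega, by nlinarith [hind i k]⟩
    obtain ⟨l, rfl⟩ := Nat.exists_eq_add_of_le hkn
    have hrest := ih l (by omega) (i + k)
    simp only [add_assoc] at hrest
    rw [Finset.sum_range_add]
    push_cast
    linarith [hH i k l]

end IsSubadditiveArray

section SubadditiveProcess

variable {X : Type*} [MeasurableSpace X] {μ : Measure X} {T : X → X} {g g' : ℕ → X → ℝ}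

lemma ae_isSubadditiveArray (hT : Measure.QuasiMeasurePreserving T μ μ)
    (hsub : ∀ᵐ x ∂μ, ∀ m n, g (m + n) x ≤ g m x + g n (T^[m] x)) :
    ∀ᵐ x ∂μ, IsSubadditiveArray fun i n => g n (T^[i] x) := by
  filter_upwards [ae_forall_iterate hT hsub] with x hx i m n
  simpa only [← Function.iterate_add_apply, add_comm] using hx i m n

lemma ae_le_birkhoffSum (hT : Measure.QuasiMeasurePreserving T μ μ) (h0 : g 0 = 0)
    (hsub : ∀ᵐ x ∂μ, ∀ m n, g (m + n) x ≤ g m x + g n (T^[m] x)) :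
    ∀ᵐ x ∂μ, ∀ n, g n x ≤ birkhoffSum T (g 1) n x := by
  filter_upwards [ae_isSubadditiveArray hT hsub] with x hx n
  simpa [birkhoffSum] using hx.le_sum_range (by simp [h0]) 0 n

/-- An integrable subadditive process over `T`, in the sense of Kingman. The normalisation
`g 0 = 0` costs nothing, since only the values at positive times matter asymptotically. -/
structure IsSubadditiveProcess (μ : Measure X) (T : X → X) (g : ℕ → X → ℝ) : Prop where
  zero : g 0 = 0
  integrable : ∀ n, Integrable (g n) μ
  subadd : ∀ᵐ x ∂μ, ∀ m n, g (m + n) x ≤ g m x + g n (T^[m] x)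

lemma isSubadditiveProcess_birkhoffSum (hT : MeasurePreserving T μ μ) {φ : X → ℝ}
    (hφ : Integrable φ μ) : IsSubadditiveProcess μ T (birkhoffSum T φ) where
  zero := birkhoffSum_zero' T φ
  integrable := integrable_birkhoffSum hT hφ
  subadd := .of_forall fun x m n => (birkhoffSum_add T φ m n x).le

namespace IsSubadditiveProcess

lemma add (hg : IsSubadditiveProcess μ T g) (hg' : IsSubadditiveProcess μ T g') :
    IsSubadditiveProcess μ T (g + g') where
  zero := by simp [hg.zero, hg'.zero]
  integrable n := (hg.integrable n).add (hg'.integrable n)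
  subadd := by
    filter_upwards [hg.subadd, hg'.subadd] with x hx hx' m n
    simp only [Pi.add_apply]
    linarith [hx m n, hx' m n]

lemma sub_birkhoffSum (hg : IsSubadditiveProcess μ T g) (hT : MeasurePreserving T μ μ)
    {φ : X → ℝ} (hφ : Integrable φ μ) : IsSubadditiveProcess μ T (g - birkhoffSum T φ) := by
  have hneg : birkhoffSum T (-φ) = -birkhoffSum T φ := by
    ext n x
    exact birkhoffSum_neg T φ n x
  simpa only [hneg, ← sub_eq_add_neg] using hg.add (isSubadditiveProcess_birkhoffSum hT hφ.neg)

lemma subadditive_integral (hg : IsSubadditiveProcess μ T g) (hT : MeasurePreserving T μ μ) :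
    Subadditive fun n => ∫ x, g n x ∂μ := by
  intro m n
  dsimp only
  have hshift : Integrable (fun x => g n (T^[m] x)) μ :=
    (hT.iterate m).integrable_comp_of_integrable (hg.integrable n)
  rw [← integral_comp_of_measurePreserving (hT.iterate m) (hg.integrable n).aestronglyMeasurable,
    ← integral_add (hg.integrable m) hshift]
  refine integral_mono_ae (hg.integrable _) ((hg.integrable m).add hshift) ?_
  filter_upwards [hg.subadd] with x hx using hx m n

lemma mul_le_integral_of_tendsto (hg : IsSubadditiveProcess μ T g) (hT : MeasurePreserving T μ μ)
    {a : ℝ} (ha : Tendsto (fun n : ℕ => (∫ x, g n x ∂μ) / n) atTop (𝓝 a)) (n : ℕ) :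
    n * a ≤ ∫ x, g n x ∂μ := by
  rcases n.eq_zero_or_pos with rfl | hn
  · simp [hg.zero]
  have hsub := hg.subadditive_integral hT
  have hbdd := ha.bddBelow_range
  rw [tendsto_nhds_unique ha (hsub.tendsto_lim hbdd), mul_comm]
  exact (le_div_iff₀ (by positivity)).1 (hsub.lim_le_div hbdd hn.ne')

lemma of_frequently_integrable {ψ : X → ℝ} (hT : MeasurePreserving T μ μ)
    (hmeas : ∀ n, AEStronglyMeasurable (g n) μ) (hzero : g 0 = 0)
    (hsub : ∀ᵐ x ∂μ, ∀ m n, g (m + n) x ≤ g m x + g n (T^[m] x)) (hψ : Integrable ψ μ)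
    (hle : g 1 ≤ ψ) (hgint : ∃ᶠ n in atTop, Integrable (g n) μ) : IsSubadditiveProcess μ T g := by
  refine ⟨hzero, fun n => ?_, hsub⟩
  have hupper : ∀ᵐ x ∂μ, ∀ n, g n x ≤ birkhoffSum T ψ n x := by
    filter_upwards [ae_le_birkhoffSum hT.quasiMeasurePreserving hzero hsub] with x hx n
      using (hx n).trans (Finset.sum_le_sum fun i _ => hle _)
  obtain ⟨_, hnN, hN⟩ := frequently_atTop.1 hgint n
  obtain ⟨k, rfl⟩ := Nat.exists_eq_add_of_le hnN
  refine integrable_of_le_of_le (g₁ := fun x => g (n + k) x - birkhoffSum T ψ k (T^[n] x))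
    (hmeas n) ?_ (hupper.mono fun x hx => hx n)
    (hN.sub ((hT.iterate n).integrable_comp_of_integrable (integrable_birkhoffSum hT hψ k)))
    (integrable_birkhoffSum hT hψ n)
  filter_upwards [hsub, ae_forall_iterate hT.quasiMeasurePreserving hupper] with x hx hxupper
  linarith [hx n k, hxupper n k]

end IsSubadditiveProcess

end SubadditiveProcess

/-- The points whose process stays above slope `s` at all times `1, …, N`. -/
def aboveSlopeSet {X : Type*} (g : ℕ → X → ℝ) (s : ℝ) (N : ℕ) : Set X :=
  {x | ∀ k, 1 ≤ k → k ≤ N → k * s < g k x}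

lemma antitone_aboveSlopeSet {X : Type*} (g : ℕ → X → ℝ) (s : ℝ) : Antitone (aboveSlopeSet g s) :=
  fun _ _ hNN' _ hx k hk hkN => hx k hk (hkN.trans hNN')

section AboveSlopeSet

variable {X : Type*} [MeasurableSpace X] {μ : Measure X} {g : ℕ → X → ℝ}

lemma nullMeasurableSet_aboveSlopeSet (hg : ∀ n, AEMeasurable (g n) μ) (s : ℝ) (N : ℕ) :
    NullMeasurableSet (aboveSlopeSet g s N) μ := by
  have hinter : aboveSlopeSet g s N = ⋂ k : ℕ, ⋂ _ : 1 ≤ k, ⋂ _ : k ≤ N, {x | k * s < g k x} := by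
    ext x
    simp [aboveSlopeSet]
  rw [hinter]
  exact .iInter fun k => .iInter fun _ => .iInter fun _ =>
    nullMeasurableSet_lt aemeasurable_const (hg k)

lemma tendsto_measureReal_aboveSlopeSet [IsFiniteMeasure μ] (hg : ∀ n, AEMeasurable (g n) μ)
    {s : ℝ} (hslope : ∀ᵐ x ∂μ, ∃ k : ℕ, 1 ≤ k ∧ g k x ≤ k * s) :
    Tendsto (fun N => μ.real (aboveSlopeSet g s N)) atTop (𝓝 0) := by
  have hnull : μ (⋂ N, aboveSlopeSet g s N) = 0 := by
    rw [measure_eq_zero_iff_ae_notMem]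
    filter_upwards [hslope] with x ⟨k, hk, hle⟩ hx
    exact hle.not_gt (Set.mem_iInter.1 hx k k hk le_rfl)
  have hlim := tendsto_measure_iInter_atTop (μ := μ)
    (nullMeasurableSet_aboveSlopeSet hg s) (antitone_aboveSlopeSet g s) ⟨0, measure_ne_top _ _⟩
  rw [hnull] at hlim
  exact (ENNReal.tendsto_toReal ENNReal.zero_ne_top).comp hlim

end AboveSlopeSet

namespace IsSubadditiveProcess

variable {X : Type*} [MeasurableSpace X] {μ : Measure X} {T : X → X} {g : ℕ → X → ℝ}

lemma integral_le_of_nonpos [IsProbabilityMeasure μ] (hg : IsSubadditiveProcess μ T g)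
    (hT : MeasurePreserving T μ μ) (hneg : ∀ᵐ x ∂μ, ∀ n, g n x ≤ 0) {s : ℝ} (hs : s ≤ 0)
    (N n : ℕ) : ∫ x, g n x ∂μ ≤ s * (n - N - n * μ.real (aboveSlopeSet g s N)) := by
  set B := aboveSlopeSet g s N
  have hB : NullMeasurableSet B μ :=
    nullMeasurableSet_aboveSlopeSet (fun n => (hg.integrable n).aemeasurable) s N
  have hind : Integrable (B.indicator (1 : X → ℝ)) μ := (integrable_const 1).indicator₀ hB
  have hle : ∀ᵐ x ∂μ, g n x ≤ s * (n - N - birkhoffSum T (B.indicator 1) n x) := by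
    filter_upwards [ae_isSubadditiveArray hT.quasiMeasurePreserving hg.subadd,
      ae_forall_iterate hT.quasiMeasurePreserving hneg] with x hx hxneg
    have hslow : ∀ i ∉ (fun i => T^[i] x) ⁻¹' B,
        ∃ k, 1 ≤ k ∧ k ≤ N ∧ g k (T^[i] x) ≤ k * s := fun i hi => by
      simpa [B, aboveSlopeSet] using hi
    have hbound := hx.le_mul_sub_sum_indicator hxneg hs hslow 0 n
    simp only [zero_add] at hbound
    exact hbound
  calc ∫ x, g n x ∂μ ≤ ∫ x, s * (n - N - birkhoffSum T (B.indicator 1) n x) ∂μ :=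
        integral_mono_ae (hg.integrable n)
          (((integrable_const _).sub (integrable_birkhoffSum hT hind n)).const_mul s) hle
    _ = s * (n - N - n * μ.real B) := by
        rw [integral_const_mul,
          integral_sub (integrable_const _) (integrable_birkhoffSum hT hind n),
          integral_birkhoffSum hT hind, integral_indicator₀ hB]
        simp

lemma le_slope_of_ae_exists_le [IsProbabilityMeasure μ] (hg : IsSubadditiveProcess μ T g)
    (hT : MeasurePreserving T μ μ) (hneg : ∀ᵐ x ∂μ, ∀ n, g n x ≤ 0) {a s : ℝ} (hs : s ≤ 0)
    (ha : ∀ n : ℕ, n * a ≤ ∫ x, g n x ∂μ)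
    (hslope : ∀ᵐ x ∂μ, ∃ k : ℕ, 1 ≤ k ∧ g k x ≤ k * s) : a ≤ s := by
  have hbound : ∀ N, a ≤ s * (1 - μ.real (aboveSlopeSet g s N)) := by
    intro N
    by_contra! hlt
    obtain ⟨n, hn⟩ := exists_lt_nsmul (sub_pos.2 hlt) (-s * N)
    rw [nsmul_eq_mul] at hn
    linarith [(ha n).trans (hg.integral_le_of_nonpos hT hneg hs N n)]
  have hlim : Tendsto (fun N => s * (1 - μ.real (aboveSlopeSet g s N))) atTop (𝓝 (s * (1 - 0))) :=
    ((tendsto_measureReal_aboveSlopeSet (fun n => (hg.integrable n).aemeasurable)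
      hslope).const_sub 1).const_mul s
  simpa using ge_of_tendsto' hlim hbound

lemma ae_exists_le_or_ae_exists_le [IsFiniteMeasure μ] (hg : IsSubadditiveProcess μ T g)
    (hT : Ergodic T μ) (hneg : ∀ᵐ x ∂μ, ∀ n, g n x ≤ 0) (s : ℝ) :
    (∀ᵐ x ∂μ, ∃ M : ℕ, ∀ n : ℕ, n * s - M ≤ g n x) ∨
      ∀ᵐ x ∂μ, ∃ k : ℕ, 1 ≤ k ∧ g k x ≤ k * s := by
  let U : Set X := {x | ∀ M : ℕ, ∃ n : ℕ, g n x < n * s - M}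
  have hU : NullMeasurableSet U μ := by
    have hinter : U = ⋂ M : ℕ, ⋃ n : ℕ, {x | g n x < n * s - M} := by
      ext x
      simp [U]
    rw [hinter]
    exact .iInter fun M => .iUnion fun n =>
      nullMeasurableSet_lt (hg.integrable n).aemeasurable aemeasurable_const
  have hinv : T ⁻¹' U ≤ᵐ[μ] U := by
    filter_upwards [hneg, hg.subadd] with x hxneg hxsub hx M
    obtain ⟨n, hn⟩ := hx (M + ⌈-s⌉₊)
    have hstep := hxsub 1 n
    rw [Function.iterate_one] at hstep
    refine ⟨1 + n, ?_⟩
    push_cast at hn ⊢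
    linarith [hxneg 1, Nat.le_ceil (-s)]
  rcases hT.ae_empty_or_univ_of_preimage_ae_le hU hinv with hempty | huniv
  · left
    filter_upwards [measure_eq_zero_iff_ae_notMem.1 (ae_eq_empty.1 hempty)] with x hx
    simpa [U] using hx
  · right
    filter_upwards [eventuallyEq_univ.1 huniv] with x hx
    obtain ⟨k, hk⟩ := hx 0
    rcases k.eq_zero_or_pos with rfl | hpos
    · simp [hg.zero] at hk
    · exact ⟨k, hpos, by simpa using hk.le⟩

lemma ae_exists_le_of_nonpos [IsProbabilityMeasure μ] (hg : IsSubadditiveProcess μ T g)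
    (hT : Ergodic T μ) (hneg : ∀ᵐ x ∂μ, ∀ n, g n x ≤ 0) {a s : ℝ}
    (ha : ∀ n : ℕ, n * a ≤ ∫ x, g n x ∂μ) (hs : s < a) :
    ∀ᵐ x ∂μ, ∃ M : ℕ, ∀ n : ℕ, n * s - M ≤ g n x := by
  have ha0 : a ≤ 0 := by
    simpa using (ha 1).trans (integral_nonpos_of_ae (hneg.mono fun x hx => hx 1))
  refine (hg.ae_exists_le_or_ae_exists_le hT hneg s).resolve_right fun hslope => ?_
  exact hs.not_ge
    (hg.le_slope_of_ae_exists_le hT.toMeasurePreserving hneg (hs.le.trans ha0) ha hslope)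

end IsSubadditiveProcess

section Birkhoff

variable {X : Type*} [MeasurableSpace X] {μ : Measure X} [IsProbabilityMeasure μ] {T : X → X}
  {φ : X → ℝ}

lemma ae_exists_le_birkhoffSum_of_le (hT : Ergodic T μ) (hφ : Integrable φ μ) {K : ℝ}
    (hK : ∀ x, φ x ≤ K) {s : ℝ} (hs : s < ∫ x, φ x ∂μ) :
    ∀ᵐ x ∂μ, ∃ M : ℕ, ∀ n : ℕ, n * s - M ≤ birkhoffSum T φ n x := by
  have hmp := hT.toMeasurePreserving
  have hshift : Integrable (fun x => φ x - K) μ := hφ.sub (integrable_const K)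
  have hneg : ∀ᵐ x ∂μ, ∀ n, birkhoffSum T (fun x => φ x - K) n x ≤ 0 :=
    .of_forall fun x n => Finset.sum_nonpos fun i _ => sub_nonpos.2 (hK _)
  have hlt : s - K < ∫ x, (φ x - K) ∂μ := by
    rw [integral_sub hφ (integrable_const K)]
    simpa using hs
  have hmean : ∀ n : ℕ, n * ∫ x, (φ x - K) ∂μ ≤
      ∫ x, birkhoffSum T (fun x => φ x - K) n x ∂μ := fun n => by
    rw [integral_birkhoffSum hmp hshift, nsmul_eq_mul]
  filter_upwards [(isSubadditiveProcess_birkhoffSum hmp hshift).ae_exists_le_of_nonpos hT hneg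
    hmean hlt] with x ⟨M, hM⟩
  refine ⟨M, fun n => ?_⟩
  have hn := hM n
  simp only [birkhoffSum, Finset.sum_sub_distrib, Finset.sum_const, Finset.card_range,
    nsmul_eq_mul] at hn ⊢
  linarith

lemma tendsto_integral_min_natCast {ν : Measure X} [IsFiniteMeasure ν] (hφ : Integrable φ ν) :
    Tendsto (fun k : ℕ => ∫ x, min (φ x) k ∂ν) atTop (𝓝 (∫ x, φ x ∂ν)) := by
  refine tendsto_integral_of_dominated_convergence (fun x => |φ x|)
    (fun k => (hφ.inf (integrable_const (k : ℝ))).aestronglyMeasurable) hφ.abs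
    (fun k => .of_forall fun x => ?_) (.of_forall fun x => ?_)
  · rw [Real.norm_eq_abs, abs_le]
    exact ⟨le_min (neg_abs_le _) ((neg_nonpos.2 (abs_nonneg _)).trans k.cast_nonneg),
      (min_le_left _ _).trans (le_abs_self _)⟩
  · refine tendsto_const_nhds.congr' ?_
    filter_upwards [eventually_ge_atTop ⌈φ x⌉₊] with k hk
    exact (min_eq_left (Nat.ceil_le.1 hk)).symm

lemma ae_exists_le_birkhoffSum (hT : Ergodic T μ) (hφ : Integrable φ μ) {s : ℝ}
    (hs : s < ∫ x, φ x ∂μ) : ∀ᵐ x ∂μ, ∃ M : ℕ, ∀ n : ℕ, n * s - M ≤ birkhoffSum T φ n x := by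
  obtain ⟨k, hk⟩ := ((tendsto_integral_min_natCast hφ).eventually_const_lt hs).exists
  filter_upwards [ae_exists_le_birkhoffSum_of_le hT (hφ.inf (integrable_const (k : ℝ)))
    (fun x => min_le_right _ _) hk] with x ⟨M, hM⟩
  exact ⟨M, fun n => (hM n).trans (Finset.sum_le_sum fun i _ => min_le_left _ _)⟩

lemma ae_exists_abs_birkhoffSum_sub_le (hT : Ergodic T μ) (hφ : Integrable φ μ) {ε : ℝ}
    (hε : 0 < ε) :
    ∀ᵐ x ∂μ, ∃ M : ℕ, ∀ n : ℕ, |birkhoffSum T φ n x - n * ∫ y, φ y ∂μ| ≤ n * ε + M := by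
  have hneg : -(∫ x, φ x ∂μ) - ε < ∫ x, (-φ) x ∂μ := by
    simpa [integral_neg] using hε
  filter_upwards [ae_exists_le_birkhoffSum hT hφ (sub_lt_self _ hε),
    ae_exists_le_birkhoffSum hT hφ.neg hneg] with x ⟨M, hM⟩ ⟨M', hM'⟩
  refine ⟨M + M', fun n => abs_le.2 ?_⟩
  have hlower := hM n
  have hupper := hM' n
  rw [birkhoffSum_neg] at hupper
  push_cast
  constructor <;> linarith [M.cast_nonneg (α := ℝ), M'.cast_nonneg (α := ℝ)]

lemma ae_exists_abs_birkhoffSum_iterate_sub_le (hT : Ergodic T μ) (hφ : Integrable φ μ) {ε : ℝ}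
    (hε : 0 < ε) :
    ∀ᵐ x ∂μ, ∃ M : ℕ, ∀ n m : ℕ,
      |birkhoffSum T φ n (T^[m] x) - n * ∫ y, φ y ∂μ| ≤ (n + m) * ε + M := by
  filter_upwards [ae_exists_abs_birkhoffSum_sub_le hT hφ (half_pos hε)] with x ⟨M, hM⟩
  refine ⟨2 * M, fun n m => ?_⟩
  have hnε : 0 ≤ n * ε := by positivity
  have hm := abs_le.1 (hM m)
  have hmn := abs_le.1 (hM (m + n))
  rw [birkhoffSum_add] at hmn
  rw [abs_le]
  push_cast at hmn ⊢
  constructor <;> linarith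

end Birkhoff

namespace IsSubadditiveProcess

variable {X : Type*} [MeasurableSpace X] {μ : Measure X} [IsProbabilityMeasure μ] {T : X → X}
  {g : ℕ → X → ℝ}

lemma ae_exists_iterate_le_of_nonpos (hg : IsSubadditiveProcess μ T g) (hT : Ergodic T μ)
    (hneg : ∀ᵐ x ∂μ, ∀ n, g n x ≤ 0) {N : ℕ} (hN : 1 ≤ N) {δ : ℝ} (hδ : 0 < δ) :
    ∀ᵐ x ∂μ, ∃ E : ℝ, ∀ n m : ℕ,
      g n (T^[m] x) ≤ n * ((∫ y, g N y ∂μ) / N) + (n + m) * δ + E := by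
  set c := ∫ y, g N y ∂μ
  have hc : c ≤ 0 := integral_nonpos_of_ae (hneg.mono fun x hx => hx N)
  filter_upwards [ae_isSubadditiveArray hT.quasiMeasurePreserving hg.subadd,
    ae_forall_iterate hT.quasiMeasurePreserving hneg,
    ae_exists_abs_birkhoffSum_iterate_sub_le hT (hg.integrable N) hδ] with x hx hxneg ⟨M, hM⟩
  refine ⟨-2 * c + M, fun n m => ?_⟩
  set p := (n - N) / N * N
  have hpn : (p : ℝ) ≤ n :=
    Nat.cast_le.2 ((Nat.div_mul_le_self (n - N) N).trans (Nat.sub_le n N))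
  have hnp : (n : ℝ) - 2 * N ≤ p := by
    have hmod : n ≤ p + 2 * N := by
      have := Nat.div_add_mod' (n - N) N
      have := Nat.mod_lt (n - N) hN
      omega
    rw [sub_le_iff_le_add]
    exact_mod_cast hmod
  have hN' : (1 : ℝ) ≤ N := by exact_mod_cast hN
  have hrest : (p + m) * δ + M ≤ N * ((n + m) * δ + M) :=
    calc (p + m) * δ + M ≤ (n + m) * δ + M := by gcongr
      _ ≤ N * ((n + m) * δ + M) := le_mul_of_one_le_left (by positivity) hN'
  have hblocks : N * g n (T^[m] x) ≤ birkhoffSum T (g N) p (T^[m] x) := by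
    simpa only [birkhoffSum, ← Function.iterate_add_apply, add_comm m] using
      hx.mul_le_sum_range_of_nonpos hxneg (Nat.div_mul_le_self (n - N) N) m
  refine le_of_mul_le_mul_left ?_ (zero_lt_one.trans_le hN')
  calc N * g n (T^[m] x) ≤ p * c + ((p + m) * δ + M) := by
        linarith [(abs_le.1 (hM p m)).2]
    _ ≤ (n - 2 * N) * c + N * ((n + m) * δ + M) :=
        add_le_add (mul_le_mul_of_nonpos_right hnp hc) hrest
    _ = N * (n * (c / N) + (n + m) * δ + (-2 * c + M)) := by
        field_simp
        ring

lemma ae_exists_abs_iterate_sub_le_of_nonpos (hg : IsSubadditiveProcess μ T g) (hT : Ergodic T μ)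
    (hneg : ∀ᵐ x ∂μ, ∀ n, g n x ≤ 0) {a : ℝ}
    (ha : Tendsto (fun n : ℕ => (∫ x, g n x ∂μ) / n) atTop (𝓝 a)) {ε : ℝ} (hε : 0 < ε) :
    ∀ᵐ x ∂μ, ∃ E : ℝ, ∀ n m : ℕ, |g n (T^[m] x) - n * a| ≤ (n + m) * ε + E := by
  obtain ⟨δ, rfl⟩ : ∃ δ, ε = 3 * δ := ⟨ε / 3, by ring⟩
  have hδ : 0 < δ := by linarith
  obtain ⟨N, hNa, hN⟩ :=
    ((ha.eventually_lt_const (lt_add_of_pos_right a hδ)).and (eventually_ge_atTop 1)).exists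
  filter_upwards [hg.subadd, hg.ae_exists_iterate_le_of_nonpos hT hneg hN hδ,
    hg.ae_exists_le_of_nonpos hT hneg (hg.mul_le_integral_of_tendsto hT.toMeasurePreserving ha)
      (sub_lt_self a hδ)] with x hsub ⟨E, hE⟩ ⟨M, hM⟩
  have hupper : ∀ n m : ℕ, g n (T^[m] x) ≤ n * (a + δ) + (n + m) * δ + E := fun n m =>
    (hE n m).trans (by gcongr)
  refine ⟨M + E, fun n m => abs_le.2 ⟨?_, ?_⟩⟩
  · have hlower := hM (m + n)
    have hinitial := hupper m 0
    push_cast at hlower hinitial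
    rw [Function.iterate_zero_apply] at hinitial
    have hnδ : 0 ≤ n * δ := by positivity
    linarith [hsub m n]
  · have hnm : 0 ≤ (n + m) * δ := by positivity
    have hmδ : 0 ≤ m * δ := by positivity
    linarith [hupper n m, M.cast_nonneg (α := ℝ)]

lemma ae_exists_abs_iterate_sub_le (hg : IsSubadditiveProcess μ T g) (hT : Ergodic T μ)
    {a : ℝ} (ha : Tendsto (fun n : ℕ => (∫ x, g n x ∂μ) / n) atTop (𝓝 a)) {ε : ℝ} (hε : 0 < ε) :
    ∀ᵐ x ∂μ, ∃ E : ℝ, ∀ n m : ℕ, |g n (T^[m] x) - n * a| ≤ (n + m) * ε + E := by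
  have hmp := hT.toMeasurePreserving
  have hφ := hg.integrable 1
  set b := ∫ x, g 1 x ∂μ
  have hneg : ∀ᵐ x ∂μ, ∀ n, (g - birkhoffSum T (g 1)) n x ≤ 0 := by
    filter_upwards [ae_le_birkhoffSum hT.quasiMeasurePreserving hg.zero hg.subadd] with x hx n
      using sub_nonpos.2 (hx n)
  have hmean : Tendsto (fun n : ℕ => (∫ x, (g - birkhoffSum T (g 1)) n x ∂μ) / n) atTop
      (𝓝 (a - b)) := by
    refine (ha.sub_const b).congr' ?_
    filter_upwards [eventually_ne_atTop 0] with n hn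
    simp only [Pi.sub_apply]
    rw [integral_sub (hg.integrable n) (integrable_birkhoffSum hmp hφ n),
      integral_birkhoffSum hmp hφ, nsmul_eq_mul, sub_div, mul_div_cancel_left₀ _ (by simpa)]
  filter_upwards [(hg.sub_birkhoffSum hmp hφ).ae_exists_abs_iterate_sub_le_of_nonpos hT hneg hmean
    (half_pos hε), ae_exists_abs_birkhoffSum_iterate_sub_le hT hφ (half_pos hε)]
    with x ⟨E, hE⟩ ⟨M, hM⟩
  refine ⟨E + M, fun n m => ?_⟩
  calc |g n (T^[m] x) - n * a|
      = |(g - birkhoffSum T (g 1)) n (T^[m] x) - n * (a - b) +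
          (birkhoffSum T (g 1) n (T^[m] x) - n * b)| := by
        simp only [Pi.sub_apply]
        ring_nf
    _ ≤ ((n + m) * (ε / 2) + E) + ((n + m) * (ε / 2) + M) :=
        (abs_add_le _ _).trans (add_le_add (hE n m) (hM n m))
    _ = (n + m) * ε + (E + M) := by ring

theorem ae_exists_forall_ge_abs_iterate_sub_le (hg : IsSubadditiveProcess μ T g)
    (hT : Ergodic T μ) {a : ℝ} (ha : Tendsto (fun n : ℕ => (∫ x, g n x ∂μ) / n) atTop (𝓝 a))
    {ε : ℝ} (hε : 0 < ε) :
    ∀ᵐ x ∂μ, ∃ n₀ : ℕ, ∀ n ≥ n₀, ∀ m : ℕ, |g n (T^[m] x) - n * a| ≤ (n + m) * ε := by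
  filter_upwards [hg.ae_exists_abs_iterate_sub_le hT ha (half_pos hε)] with x ⟨E, hE⟩
  obtain ⟨n₀, hn₀⟩ := exists_nat_ge (E / (ε / 2))
  refine ⟨n₀, fun n hn m => (hE n m).trans ?_⟩
  have hEn : E ≤ n * (ε / 2) := (div_le_iff₀ (half_pos hε)).1 (hn₀.trans (by exact_mod_cast hn))
  have hmε : 0 ≤ m * ε := by positivity
  linarith

end IsSubadditiveProcess

lemma ne_top_of_tendsto_div_of_subadditive {u : ℕ → ℝ} (hu : Subadditive u) {α : EReal}
    (hα : Tendsto (fun n : ℕ => ((u n / n : ℝ) : EReal)) atTop (𝓝 α)) : α ≠ ⊤ := by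
  refine ((le_of_tendsto hα ?_).trans_lt (EReal.coe_lt_top (u 1))).ne
  filter_upwards [eventually_gt_atTop 0] with n hn
  obtain ⟨k, rfl⟩ := Nat.exists_eq_succ_of_ne_zero hn.ne'
  rw [EReal.coe_le_coe_iff, div_le_iff₀ (by positivity)]
  have hk := hu.apply_mul_add_le k 1 1
  simp only [mul_one] at hk
  push_cast
  linarith

section ExtendedReal

lemma epos_eq_toENNReal (e : EReal) : epos e = e.toENNReal := rfl

lemma elog_of_pos {y : ℝ} (hy : 0 < y) : elog y = Real.log y := ENNReal.log_ofReal_of_pos hy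

lemma elog_of_nonpos {y : ℝ} (hy : y ≤ 0) : elog y = ⊥ := by
  simp [elog, ENNReal.ofReal_of_nonpos hy]

variable {X : Type*} [MeasurableSpace X] {μ : Measure X}

lemma eintegral_congr_ae {g g' : X → EReal} (h : g =ᵐ[μ] g') : eintegral μ g = eintegral μ g' := by
  have hpos : ∫⁻ x, epos (g x) ∂μ = ∫⁻ x, epos (g' x) ∂μ :=
    lintegral_congr_ae (h.fun_comp epos)
  have hneg : ∫⁻ x, epos (-g x) ∂μ = ∫⁻ x, epos (-g' x) ∂μ :=
    lintegral_congr_ae (h.fun_comp fun e => epos (-e))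
  rw [eintegral, eintegral, hpos, hneg]

lemma eintegral_coe {φ : X → ℝ} (hφ : Integrable φ μ) :
    eintegral μ (fun x => (φ x : EReal)) = (∫ x, φ x ∂μ : ℝ) := by
  simp only [eintegral, epos_eq_toENNReal, ← EReal.coe_neg, EReal.real_coe_toENNReal]
  have hneg : ∫⁻ x, ENNReal.ofReal (-φ x) ∂μ ≠ ⊤ := hφ.neg.lintegral_lt_top.ne
  rw [integral_eq_lintegral_pos_part_sub_lintegral_neg_part hφ, EReal.coe_sub,
    EReal.coe_ennreal_toReal hφ.lintegral_lt_top.ne, EReal.coe_ennreal_toReal hneg]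

lemma lintegral_epos_neg_ne_top {g : X → EReal} (h : eintegral μ g ≠ ⊥) :
    ∫⁻ x, epos (-(g x)) ∂μ ≠ ⊤ := by
  contrapose! h
  rw [eintegral, h, EReal.coe_ennreal_top, EReal.sub_top]

variable {F : X → ℝ}

lemma aemeasurable_epos_neg_elog (hF : AEMeasurable F μ) :
    AEMeasurable (fun x => epos (-elog (F x))) μ :=
  (ENNReal.measurable_log.comp_aemeasurable hF.ennreal_ofReal).neg.ereal_toENNReal

lemma ae_pos_of_eintegral_elog_ne_bot (hF : AEMeasurable F μ)
    (h : eintegral μ (fun x => elog (F x)) ≠ ⊥) : ∀ᵐ x ∂μ, 0 < F x := by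
  filter_upwards [ae_lt_top' (aemeasurable_epos_neg_elog hF) (lintegral_epos_neg_ne_top h)]
    with x hx
  contrapose! hx
  simp [elog_of_nonpos hx, epos]

lemma integrable_log_of_eintegral_elog_ne_bot (hF : AEMeasurable F μ)
    (h : eintegral μ (fun x => elog (F x)) ≠ ⊥) {ψ : X → ℝ} (hψ : Integrable ψ μ)
    (hle : (fun x => Real.log (F x)) ≤ᵐ[μ] ψ) : Integrable (fun x => Real.log (F x)) μ := by
  refine integrable_of_le_of_le hF.log.aestronglyMeasurable ?_ hle
    (integrable_toReal_of_lintegral_ne_top (aemeasurable_epos_neg_elog hF)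
      (lintegral_epos_neg_ne_top h)).neg hψ
  filter_upwards [ae_pos_of_eintegral_elog_ne_bot hF h] with x hx
  rw [Pi.neg_apply, neg_le, elog_of_pos hx, epos_eq_toENNReal, ← EReal.coe_neg,
    EReal.real_coe_toENNReal, ENNReal.toReal_ofReal']
  exact le_max_left _ _

end ExtendedReal

/-- The real-valued logarithms of a sequence of functions, normalised to vanish at time `0` so that
a submultiplicative `f` gives an `IsSubadditiveProcess`. The junk value `Real.log 0 = 0` is
harmless where `f n` is a.e. positive. -/
noncomputable def logProcess {X : Type*} (f : ℕ → X → ℝ) : ℕ → X → ℝ :=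
  Function.update (fun n x => Real.log (f n x)) 0 0

section LogProcess

lemma logProcess_zero {X : Type*} (f : ℕ → X → ℝ) : logProcess f 0 = 0 :=
  Function.update_self ..

lemma logProcess_of_ne_zero {X : Type*} (f : ℕ → X → ℝ) {n : ℕ} (hn : n ≠ 0) :
    logProcess f n = fun x => Real.log (f n x) :=
  Function.update_of_ne hn ..

variable {X : Type*} [MeasurableSpace X] {μ : Measure X} {T : X → X} {f : ℕ → X → ℝ}

lemma ae_forall_pos_of_frequently (hT : Measure.QuasiMeasurePreserving T μ μ)
    (hnonneg : ∀ᵐ x ∂μ, ∀ n, 0 ≤ f n x)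
    (hsub : ∀ᵐ x ∂μ, ∀ m n, 1 ≤ m → 1 ≤ n → f (n + m) x ≤ f m x * f n (T^[m] x))
    (hpos : ∃ᶠ n in atTop, ∀ᵐ x ∂μ, 0 < f n x) : ∀ᵐ x ∂μ, ∀ n, 1 ≤ n → 0 < f n x := by
  refine ae_all_iff.2 fun n => ?_
  obtain ⟨_, hnN, hN⟩ := frequently_atTop.1 hpos (n + 1)
  obtain ⟨k, rfl⟩ := Nat.exists_eq_add_of_le hnN
  filter_upwards [hN, hsub, ae_forall_iterate hT hnonneg] with x hx hxsub hxnonneg hn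
  rw [show n + 1 + k = (k + 1) + n by ring] at hx
  exact pos_of_mul_pos_left (hx.trans_le (hxsub n (k + 1) hn (by omega))) (hxnonneg n (k + 1))

lemma ae_logProcess_add_le (hT : Measure.QuasiMeasurePreserving T μ μ)
    (hsub : ∀ᵐ x ∂μ, ∀ m n, 1 ≤ m → 1 ≤ n → f (n + m) x ≤ f m x * f n (T^[m] x))
    (hpos : ∀ᵐ x ∂μ, ∀ n, 1 ≤ n → 0 < f n x) :
    ∀ᵐ x ∂μ, ∀ m n, logProcess f (m + n) x ≤ logProcess f m x + logProcess f n (T^[m] x) := by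
  filter_upwards [hsub, ae_forall_iterate hT hpos] with x hxsub hx m n
  rcases m.eq_zero_or_pos with rfl | hm
  · simp [logProcess_zero]
  rcases n.eq_zero_or_pos with rfl | hn
  · simp [logProcess_zero]
  have hmn : 1 ≤ n + m := by omega
  rw [add_comm, logProcess_of_ne_zero f (by omega), logProcess_of_ne_zero f (by omega),
    logProcess_of_ne_zero f (by omega)]
  calc Real.log (f (n + m) x) ≤ Real.log (f m x * f n (T^[m] x)) :=
        Real.log_le_log (hx 0 (n + m) hmn) (hxsub m n hm hn)
    _ = Real.log (f m x) + Real.log (f n (T^[m] x)) :=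
        Real.log_mul (hx 0 m hm).ne' (hx m n hn).ne'

lemma isSubadditiveProcess_logProcess (hT : MeasurePreserving T μ μ)
    (hmeas : ∀ n, AEMeasurable (f n) μ) (hf1 : Integrable (fun x => Real.posLog (f 1 x)) μ)
    (hsub : ∀ᵐ x ∂μ, ∀ m n, 1 ≤ m → 1 ≤ n → f (n + m) x ≤ f m x * f n (T^[m] x))
    (hpos : ∀ᵐ x ∂μ, ∀ n, 1 ≤ n → 0 < f n x)
    (hbot : ∃ᶠ n in atTop, eintegral μ (fun x => elog (f n x)) ≠ ⊥) :
    IsSubadditiveProcess μ T (logProcess f) := by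
  have hadd := ae_logProcess_add_le hT.quasiMeasurePreserving hsub hpos
  have hle : logProcess f 1 ≤ fun x => Real.posLog (f 1 x) := by
    rw [logProcess_of_ne_zero f one_ne_zero]
    exact fun x => le_max_right _ _
  have hlogmeas : ∀ n, AEStronglyMeasurable (logProcess f n) μ := by
    intro n
    rcases eq_or_ne n 0 with rfl | hn
    · simpa only [logProcess_zero] using aestronglyMeasurable_zero
    · simpa only [logProcess_of_ne_zero f hn] using (hmeas n).log.aestronglyMeasurable
  refine .of_frequently_integrable hT hlogmeas (logProcess_zero f) hadd hf1 hle ?_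
  refine (hbot.and_eventually (eventually_ne_atTop 0)).mono fun n ⟨hn, hn0⟩ => ?_
  have hupper : logProcess f n ≤ᵐ[μ] birkhoffSum T (fun x => Real.posLog (f 1 x)) n := by
    filter_upwards [ae_le_birkhoffSum hT.quasiMeasurePreserving (logProcess_zero f) hadd] with x hx
      using (hx n).trans (Finset.sum_le_sum fun i _ => hle _)
  rw [logProcess_of_ne_zero f hn0] at hupper ⊢
  exact integrable_log_of_eintegral_elog_ne_bot (hmeas n) hn (integrable_birkhoffSum hT hf1 n)
    hupper

lemma inv_mul_eintegral_elog_eventuallyEq (hgint : ∀ n, Integrable (logProcess f n) μ)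
    (hpos : ∀ᵐ x ∂μ, ∀ n, 1 ≤ n → 0 < f n x) :
    (fun n : ℕ => (((n : ℝ)⁻¹ : ℝ) : EReal) * eintegral μ (fun x => elog (f n x))) =ᶠ[atTop]
      fun n => (((∫ x, logProcess f n x ∂μ) / n : ℝ) : EReal) := by
  filter_upwards [eventually_ge_atTop 1] with n hn
  have helog : eintegral μ (fun x => elog (f n x)) = (∫ x, logProcess f n x ∂μ : ℝ) := by
    rw [← eintegral_coe (hgint n), logProcess_of_ne_zero f (by omega)]
    exact eintegral_congr_ae (hpos.mono fun x hx => elog_of_pos (hx n hn))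
  rw [helog, ← EReal.coe_mul, inv_mul_eq_div]

end LogProcess

lemma eventually_ne_bot_of_tendsto_inv_mul {u : ℕ → EReal} {α : EReal} (hα : α ≠ ⊥)
    (hu : Tendsto (fun n : ℕ => (((n : ℝ)⁻¹ : ℝ) : EReal) * u n) atTop (𝓝 α)) :
    ∀ᶠ n in atTop, u n ≠ ⊥ := by
  filter_upwards [hu.eventually_ne hα, eventually_gt_atTop 0] with n hn hpos hbot
  rw [hbot, EReal.coe_mul_bot_of_pos (by positivity)] at hn
  exact hn rfl

lemma elog_bounds_of_abs_log_sub_le {y a ε : ℝ} (hy : 0 < y) {n k : ℕ}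
    (h : |Real.log y - n * a| ≤ k * ε) :
    ((n : ℝ) : EReal) * a - ((k : ℝ) * ε : ℝ) ≤ elog y ∧
      elog y ≤ ((n : ℝ) : EReal) * a + ((k : ℝ) * ε : ℝ) := by
  rw [elog_of_pos hy, ← EReal.coe_mul, ← EReal.coe_sub, ← EReal.coe_add, EReal.coe_le_coe_iff,
    EReal.coe_le_coe_iff]
  obtain ⟨hlower, hupper⟩ := abs_le.1 h
  constructor <;> linarith

lemma integrable_posLog_of_le {X : Type*} [MeasurableSpace X] {μ : Measure X} [IsFiniteMeasure μ]
    {F : X → ℝ} (hF : AEMeasurable F μ) (hnonneg : ∀ᵐ x ∂μ, 0 ≤ F x) {C : ℝ}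
    (hC : ∀ᵐ x ∂μ, F x ≤ C) : Integrable (fun x => Real.posLog (F x)) μ := by
  refine .of_bound (Real.continuous_posLog.measurable.comp_aemeasurable hF).aestronglyMeasurable
    (Real.posLog C) ?_
  filter_upwards [hnonneg, hC] with x hx hxC
  rw [Real.norm_of_nonneg Real.posLog_nonneg]
  exact Real.posLog_le_posLog hx hxC

theorem subadditive_ergodic_uniform_control_general {X : Type*} [MeasurableSpace X]
    (μ : Measure X) [IsProbabilityMeasure μ]
    (T : X → X) (hT : Ergodic T μ) (f : ℕ → X → ℝ)
    (hmeas : ∀ n, AEMeasurable (f n) μ) (hnonneg : ∀ᵐ x ∂μ, ∀ n, 0 ≤ f n x)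
    (hf1 : Integrable (fun x => Real.posLog (f 1 x)) μ)
    (hsub : ∀ᵐ x ∂μ, ∀ m n, 1 ≤ m → 1 ≤ n → f (n + m) x ≤ f m x * f n (T^[m] x))
    (α : EReal)
    (hα : Tendsto (fun n : ℕ => (((n : ℝ)⁻¹ : ℝ) : EReal) *
        eintegral μ (fun x => elog (f n x))) atTop (𝓝 α))
    (hα' : α ≠ ⊥) (ε : ℝ) (hε : 0 < ε) :
    ∀ᵐ x ∂μ, ∃ n₀ : ℕ, 1 ≤ n₀ ∧ ∀ n : ℕ, n₀ ≤ n → ∀ m : ℕ,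
      ((n : ℝ) : EReal) * α - (((n + m : ℕ) : ℝ) * ε : ℝ) ≤ elog (f n (T^[m] x)) ∧
        elog (f n (T^[m] x)) ≤ ((n : ℝ) : EReal) * α + (((n + m : ℕ) : ℝ) * ε : ℝ) := by
  have hqmp := hT.quasiMeasurePreserving
  have hbot := (eventually_ne_bot_of_tendsto_inv_mul hα' hα).frequently
  have hpos := ae_forall_pos_of_frequently hqmp hnonneg hsub
    (hbot.mono fun n => ae_pos_of_eintegral_elog_ne_bot (hmeas n))
  have hg := isSubadditiveProcess_logProcess hT.toMeasurePreserving hmeas hf1 hsub hpos hbot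
  have hmean : Tendsto (fun n : ℕ => (((∫ x, logProcess f n x ∂μ) / n : ℝ) : EReal)) atTop
      (𝓝 α) :=
    hα.congr' (inv_mul_eintegral_elog_eventuallyEq hg.integrable hpos)
  lift α to ℝ using
    ⟨ne_top_of_tendsto_div_of_subadditive (hg.subadditive_integral hT.toMeasurePreserving) hmean,
      hα'⟩
  filter_upwards [ae_forall_iterate hqmp hpos,
    hg.ae_exists_forall_ge_abs_iterate_sub_le hT (EReal.tendsto_coe.1 hmean) hε]
    with x hxpos ⟨n₀, hn₀⟩
  refine ⟨max n₀ 1, le_max_right _ _, fun n hn m => ?_⟩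
  have hn1 : 1 ≤ n := (le_max_right _ _).trans hn
  have hbound := hn₀ n ((le_max_left _ _).trans hn) m
  rw [logProcess_of_ne_zero f (by omega)] at hbound
  exact elog_bounds_of_abs_log_sub_le (hxpos m n hn1) (by exact_mod_cast hbound)

/-- Proposition 2.3(i): if `α = lim (1/n) ∫ log f_n dμ ≠ -∞` for a subadditive
sequence of nonnegative functions over an ergodic system, then for every `ε > 0` and
a.e. `x` there is `n₀(x)` with `|log f_n(T^m x) - n α| ≤ (n+m) ε` for all `n ≥ n₀`
and all `m`. -/
theorem subadditive_ergodic_uniform_control {X : Type*} [MeasurableSpace X]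
    (μ : Measure X) [IsProbabilityMeasure μ]
    (T : X → X) (hT : Ergodic T μ) (f : ℕ → X → ℝ)
    (hmeas : ∀ n, Measurable (f n)) (hnonneg : ∀ n x, 0 ≤ f n x)
    (C : ℝ) (hC : ∀ x, f 1 x ≤ C)
    (hsub : ∀ m n : ℕ, 1 ≤ m → 1 ≤ n → ∀ x, f (n + m) x ≤ f m x * f n (T^[m] x))
    (α : EReal)
    (hα : Tendsto (fun n : ℕ => (((n : ℝ)⁻¹ : ℝ) : EReal) *
        eintegral μ (fun x => elog (f n x))) atTop (nhds α))
    (hα' : α ≠ ⊥) (ε : ℝ) (hε : 0 < ε) :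
    ∀ᵐ x ∂μ, ∃ n₀ : ℕ, 1 ≤ n₀ ∧ ∀ n : ℕ, n₀ ≤ n → ∀ m : ℕ, 1 ≤ m →
      ((n : ℝ) : EReal) * α - (((n + m : ℕ) : ℝ) * ε : ℝ) ≤ elog (f n (T^[m] x)) ∧
        elog (f n (T^[m] x)) ≤ ((n : ℝ) : EReal) * α + (((n + m : ℕ) : ℝ) * ε : ℝ) := by
  filter_upwards [subadditive_ergodic_uniform_control_general μ T hT f
    (fun n => (hmeas n).aemeasurable) (.of_forall fun x n => hnonneg n x)
    (integrable_posLog_of_le (hmeas 1).aemeasurable (.of_forall (hnonneg 1)) (.of_forall hC))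
    (.of_forall fun x m n hm hn => hsub m n hm hn x) α hα hα' ε hε] with x ⟨n₀, hn₀, hx⟩
  exact ⟨n₀, hn₀, fun n hn m _ => hx n hn m⟩
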